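/- Let p and q be continuously differentiable, strictly positive probability densities on ℝⁿ. Let a: ℝⁿ → ℝ^d, b: ℝⁿ → ℝ^m, and M: ℝⁿ → ℝ^{d×m} satisfy ‖a(h)‖₂ ≤ C and ‖b(h)‖₂ ≤ C for all h. Suppose each real-valued component of a, of b, of M, and of the matrix-valued map h ↦ a(h)b(h)ᵀ admits a continuously differentiable Stein solution g with respect to p (i.e. S_p g equals that component minus its p-expectation pointwise), with q·g vanishing at infinity, ∇·(q g) Lebesgue-integrable, and ∫ q‖g‖₂² < ∞; let κ_a, κ_b, κ_M, κ_{ab} denote the corresponding Stein factors (the square root of the sum over components of ∫ q‖g‖₂² for the respective Stein solutions). Then ‖(E_q[M] + Cov_q(a,b)) − (E_p[M] + Cov_p(a,b))‖_F ≤ (κ_{ab} + C·κ_b + C·κ_a + κ_M) · √(F(q‖p)). (Applied with a = ∇_v log p̃_θ(v,·), b = ∇_θ log p̃_θ(v,·), M = ∂∇_v log p̃_θ(v,·)/∂θ, p the true posterior and q the variational posterior, this bounds the bias of VaGES by the square root of the Fisher divergence between variational and true posterior up to a constant.) -/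

import Mathlib

open MeasureTheory Filter Topology
open scoped RealInnerProductSpace ENNReal

/-- The divergence `∇·f` of a vector field `f : ℝⁿ → ℝⁿ`, i.e. the trace of its Jacobian. -/
noncomputable def vdiv {n : ℕ} (f : EuclideanSpace ℝ (Fin n) → EuclideanSpace ℝ (Fin n))
    (x : EuclideanSpace ℝ (Fin n)) : ℝ :=
  LinearMap.trace ℝ (EuclideanSpace ℝ (Fin n)) (fderiv ℝ f x).toLinearMap

/-- The Stein operator `(S_p g)(x) = ⟨∇ log p(x), g(x)⟩ + tr(Dg(x))`. -/
noncomputable def steinOp {n : ℕ} (p : EuclideanSpace ℝ (Fin n) → ℝ)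
    (g : EuclideanSpace ℝ (Fin n) → EuclideanSpace ℝ (Fin n))
    (x : EuclideanSpace ℝ (Fin n)) : ℝ :=
  ⟪gradient (fun y => Real.log (p y)) x, g x⟫ + vdiv g x

/-- The Fisher divergence `F(q‖p) = ∫ q(x) ‖∇ log q(x) − ∇ log p(x)‖₂² dx` (as an extended
nonnegative real, so that it is `+∞` when the integral diverges). -/
noncomputable def fisherDivL {n : ℕ} (q p : EuclideanSpace ℝ (Fin n) → ℝ) : ℝ≥0∞ :=
  ∫⁻ x, ENNReal.ofReal (q x *
    ‖gradient (fun y => Real.log (q y)) x - gradient (fun y => Real.log (p y)) x‖ ^ 2)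

/-- `g` is a Stein solution for the scalar function `f` w.r.t. the density `p` (with regularity
conditions stated relative to the density `q`): `g` is `C¹`, it solves the Stein equation
`S_p g = f − E_p f` pointwise, `q·g` vanishes at infinity, `∇·(q g)` is Lebesgue-integrable,
and `∫ q‖g‖² < ∞`. -/
noncomputable def SteinSolution {n : ℕ} (p q : EuclideanSpace ℝ (Fin n) → ℝ)
    (f : EuclideanSpace ℝ (Fin n) → ℝ)
    (g : EuclideanSpace ℝ (Fin n) → EuclideanSpace ℝ (Fin n)) : Prop :=
  ContDiff ℝ 1 g ∧ (∀ x, steinOp p g x = f x - ∫ y, p y * f y) ∧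
    Tendsto (fun x => q x • g x) (cocompact (EuclideanSpace ℝ (Fin n))) (𝓝 0) ∧
    Integrable (vdiv fun x => q x • g x) ∧ Integrable (fun x => q x * ‖g x‖ ^ 2)

/-- The outer product `a bᵀ`, viewed as an element of `ℝ^{d×m}` with the Frobenius norm. -/
noncomputable def outer {d m : ℕ} (a : EuclideanSpace ℝ (Fin d))
    (b : EuclideanSpace ℝ (Fin m)) : EuclideanSpace ℝ (Fin d × Fin m) :=
  (WithLp.equiv 2 (Fin d × Fin m → ℝ)).symm fun ij => a ij.1 * b ij.2

lemma vdiv_eq_sum {n : ℕ} (G : EuclideanSpace ℝ (Fin n) → EuclideanSpace ℝ (Fin n))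
    (hG : Differentiable ℝ G) (x : EuclideanSpace ℝ (Fin n)) :
    vdiv G x = ∑ i, fderiv ℝ (fun y => G y i) x (EuclideanSpace.single i 1) := by
  unfold vdiv
  rw [LinearMap.trace_eq_sum_inner _ (EuclideanSpace.basisFun (Fin n) ℝ)]
  refine Finset.sum_congr rfl fun i _ => ?_
  have h : HasFDerivAt (fun y => G y i)
      ((EuclideanSpace.proj i : EuclideanSpace ℝ (Fin n) →L[ℝ] ℝ).comp (fderiv ℝ G x)) x :=
    (EuclideanSpace.proj i : EuclideanSpace ℝ (Fin n) →L[ℝ] ℝ).hasFDerivAt.comp x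
      (hG x).hasFDerivAt
  rw [h.fderiv]
  simp [EuclideanSpace.inner_single_left]

lemma ibp_vdiv {n : ℕ} (χ : EuclideanSpace ℝ (Fin n) → ℝ) (hχ : ContDiff ℝ 1 χ)
    (hs : HasCompactSupport χ)
    (G : EuclideanSpace ℝ (Fin n) → EuclideanSpace ℝ (Fin n)) (hG : ContDiff ℝ 1 G) :
    ∫ x, χ x * vdiv G x = - ∫ x, fderiv ℝ χ x (G x) := by
  have hGi : ∀ i, ContDiff ℝ 1 (fun y => G y i) := fun i =>
    (EuclideanSpace.proj i : EuclideanSpace ℝ (Fin n) →L[ℝ] ℝ).contDiff.comp hG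
  have hGc : ∀ i, Continuous (fun y => G y i) := fun i => (hGi i).continuous
  have hχ' : Continuous (fderiv ℝ χ) := hχ.continuous_fderiv one_ne_zero
  have hGi' : ∀ i, Continuous (fderiv ℝ (fun y => G y i)) := fun i =>
    (hGi i).continuous_fderiv one_ne_zero
  have e1 : ∀ x, χ x * vdiv G x
      = ∑ i, χ x * fderiv ℝ (fun y => G y i) x (EuclideanSpace.single i 1) := by
    intro x
    rw [vdiv_eq_sum G (hG.differentiable one_ne_zero), Finset.mul_sum]
  have e2 : ∀ x, fderiv ℝ χ x (G x)
      = ∑ i, fderiv ℝ χ x (EuclideanSpace.single i 1) * G x i := by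
    intro x
    conv_lhs => rw [← (EuclideanSpace.basisFun (Fin n) ℝ).sum_repr (G x)]
    simp [mul_comm]
  have hs' : HasCompactSupport (fderiv ℝ χ) := hs.fderiv ℝ
  have i1 : ∀ i, Integrable (fun x =>
      χ x * fderiv ℝ (fun y => G y i) x (EuclideanSpace.single i 1)) := fun i =>
    Continuous.integrable_of_hasCompactSupport
      (hχ.continuous.mul ((hGi' i).clm_apply continuous_const)) hs.mul_right
  have i2 : ∀ i, Integrable (fun x =>
      fderiv ℝ χ x (EuclideanSpace.single i 1) * G x i) := fun i =>
    Continuous.integrable_of_hasCompactSupport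
      ((hχ'.clm_apply continuous_const).mul (hGc i))
      ((hs.fderiv_apply ℝ (EuclideanSpace.single i 1)).mul_right)
  have i3 : ∀ i, Integrable (fun x => χ x * G x i) := fun i =>
    Continuous.integrable_of_hasCompactSupport (hχ.continuous.mul (hGc i)) hs.mul_right
  simp_rw [e1, e2]
  rw [integral_finsetSum _ fun i _ => i1 i, integral_finsetSum _ fun i _ => i2 i,
    ← Finset.sum_neg_distrib]
  refine Finset.sum_congr rfl fun i _ => ?_
  exact integral_mul_fderiv_eq_neg_fderiv_mul_of_integrable (i2 i) (i1 i) (i3 i)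
    (fun x _ => hχ.differentiable one_ne_zero x)
    (fun x _ => (hGi i).differentiable one_ne_zero x)

lemma integral_vdiv_eq_zero {n : ℕ}
    (G : EuclideanSpace ℝ (Fin n) → EuclideanSpace ℝ (Fin n)) (hG : ContDiff ℝ 1 G)
    (hi : Integrable G) (hd : Integrable (vdiv G)) : ∫ x, vdiv G x = 0 := by
  let φ : ContDiffBump (0 : EuclideanSpace ℝ (Fin n)) := ⟨1, 2, one_pos, one_lt_two⟩
  have hφ : ContDiff ℝ 1 φ := φ.contDiff
  obtain ⟨B, hB⟩ : ∃ B, ∀ x, ‖fderiv ℝ φ x‖ ≤ B :=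
    (hφ.continuous_fderiv one_ne_zero).bounded_above_of_compact_support
      (φ.hasCompactSupport.fderiv ℝ)
  have hB0 : 0 ≤ B := (norm_nonneg _).trans (hB 0)
  let r : ℕ → ℝ := fun k => ((k : ℝ) + 1)⁻¹
  have hr0 : ∀ k, 0 < r k := fun k => by positivity
  have hrt : Tendsto r atTop (𝓝 0) := by
    simpa [r, one_div] using tendsto_one_div_add_atTop_nhds_zero_nat (𝕜 := ℝ)
  let χ : ℕ → EuclideanSpace ℝ (Fin n) → ℝ := fun k x => φ (r k • x)
  have hχ : ∀ k, ContDiff ℝ 1 (χ k) := fun k => hφ.comp (contDiff_const_smul (r k))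
  have hχs : ∀ k, HasCompactSupport (χ k) := fun k =>
    φ.hasCompactSupport.comp_homeomorph (Homeomorph.smulOfNeZero (r k) (hr0 k).ne')
  have hχ' : ∀ k x v, ‖fderiv ℝ (χ k) x v‖ ≤ r k * (B * ‖v‖) := by
    intro k x v
    have h : HasFDerivAt (χ k) ((fderiv ℝ φ (r k • x)).comp
        (r k • ContinuousLinearMap.id ℝ (EuclideanSpace ℝ (Fin n)))) x :=
      (hφ.differentiable one_ne_zero (r k • x)).hasFDerivAt.comp x
        ((hasFDerivAt_id x).const_smul (r k))
    rw [h.fderiv]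
    simp only [ContinuousLinearMap.comp_apply, smul_apply,
      ContinuousLinearMap.id_apply, map_smul, norm_smul, Real.norm_of_nonneg (hr0 k).le]
    refine mul_le_mul_of_nonneg_left ?_ (hr0 k).le
    exact (ContinuousLinearMap.le_opNorm _ _).trans (by gcongr; exact hB _)
  have L1 : Tendsto (fun k => ∫ x, χ k x * vdiv G x) atTop (𝓝 (∫ x, vdiv G x)) := by
    refine tendsto_integral_of_dominated_convergence (fun x => ‖vdiv G x‖) ?_ hd.norm ?_ ?_
    · exact fun k => (hχ k).continuous.aestronglyMeasurable.mul hd.aestronglyMeasurable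
    · refine fun k => .of_forall fun x => ?_
      rw [norm_mul, Real.norm_of_nonneg φ.nonneg]
      exact mul_le_of_le_one_left (norm_nonneg _) φ.le_one
    · refine .of_forall fun x => ?_
      have h1 : Tendsto (fun k => r k • x) atTop (𝓝 0) := by
        simpa using hrt.smul_const x
      have h2 : ∀ᶠ k in atTop, χ k x = 1 := h1.eventually φ.eventuallyEq_one
      refine tendsto_const_nhds.congr' ?_
      filter_upwards [h2] with k hk
      rw [hk, one_mul]
  have L2 : Tendsto (fun k => ∫ x, χ k x * vdiv G x) atTop (𝓝 0) := by
    have L3 : Tendsto (fun k => r k * (B * ∫ x, ‖G x‖)) atTop (𝓝 0) := by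
      simpa using hrt.mul_const (B * ∫ x, ‖G x‖)
    refine squeeze_zero_norm (fun k => ?_) L3
    rw [ibp_vdiv (χ k) (hχ k) (hχs k) G hG, norm_neg, ← integral_const_mul,
      ← integral_const_mul]
    exact norm_integral_le_of_norm_le ((hi.norm.const_mul B).const_mul (r k))
      (.of_forall fun x => hχ' k x (G x))
  exact tendsto_nhds_unique L1 L2

lemma vdiv_smul {n : ℕ} (q : EuclideanSpace ℝ (Fin n) → ℝ)
    (g : EuclideanSpace ℝ (Fin n) → EuclideanSpace ℝ (Fin n))
    (hq : ContDiff ℝ 1 q) (hqpos : ∀ x, 0 < q x) (hg : ContDiff ℝ 1 g)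
    (x : EuclideanSpace ℝ (Fin n)) :
    vdiv (fun x => q x • g x) x = q x * steinOp q g x := by
  have hqd := (hq.differentiable one_ne_zero x).hasFDerivAt
  have hgd := (hg.differentiable one_ne_zero x).hasFDerivAt
  have hl := hqd.log (hqpos x).ne'
  unfold steinOp
  rw [inner_gradient_left, hl.fderiv]
  unfold vdiv
  have hm : fderiv ℝ (fun x => q x • g x) x = _ := (hqd.smul hgd).fderiv
  rw [hm]
  simp only [ContinuousLinearMap.toLinearMap_add, ContinuousLinearMap.toLinearMap_smul, map_add,
    map_smul, smul_eq_mul]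
  rw [mul_add, add_comm]
  congr 1
  rw [LinearMap.trace_eq_sum_inner _ (EuclideanSpace.basisFun (Fin n) ℝ)]
  simp only [smul_apply, smul_eq_mul, mul_inv_cancel_left₀ (hqpos x).ne']
  conv_rhs => rw [← (EuclideanSpace.basisFun (Fin n) ℝ).sum_repr (g x)]
  simp [EuclideanSpace.inner_single_left, mul_comm]

lemma continuous_gradient_log {n : ℕ} (p : EuclideanSpace ℝ (Fin n) → ℝ)
    (hp : ContDiff ℝ 1 p) (hppos : ∀ x, 0 < p x) :
    Continuous (gradient (fun y => Real.log (p y))) :=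
  (InnerProductSpace.toDual ℝ (EuclideanSpace ℝ (Fin n))).symm.continuous.comp
    ((hp.log fun x => (hppos x).ne').continuous_fderiv one_ne_zero)

lemma stein_bound {n : ℕ}
    (p q : EuclideanSpace ℝ (Fin n) → ℝ)
    (hp : ContDiff ℝ 1 p) (hppos : ∀ x, 0 < p x)
    (hqc : ContDiff ℝ 1 q) (hqpos : ∀ x, 0 < q x) (hqnorm : ∫ x, q x = 1)
    (f : EuclideanSpace ℝ (Fin n) → ℝ)
    (g : EuclideanSpace ℝ (Fin n) → EuclideanSpace ℝ (Fin n))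
    (h : SteinSolution p q f g) (hf : Integrable (fun x => q x * f x)) :
    ‖(∫ x, q x * f x) - ∫ x, p x * f x‖ₑ ≤
      ENNReal.ofReal (Real.sqrt (∫ x, q x * ‖g x‖ ^ 2)) * (fisherDivL q p) ^ (2⁻¹ : ℝ) := by
  obtain ⟨hg, hst, -, hdiv, hg2⟩ := h
  have hqi : Integrable q := by
    by_contra hn
    rw [integral_undef hn] at hqnorm
    exact zero_ne_one hqnorm
  have hcq := continuous_gradient_log q hqc hqpos
  have hcp := continuous_gradient_log p hp hppos
  have hqgi : Integrable (fun x => q x • g x) := by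
    refine (hqi.add hg2).mono' (hqc.continuous.smul hg.continuous).aestronglyMeasurable
      (.of_forall fun x => ?_)
    rw [norm_smul, Real.norm_of_nonneg (hqpos x).le]
    simp only [Pi.add_apply]
    nlinarith [hqpos x, sq_nonneg (‖g x‖ - 1), mul_nonneg (hqpos x).le (sq_nonneg (‖g x‖ - 1)),
      mul_nonneg (hqpos x).le (norm_nonneg (g x))]
  have hz := integral_vdiv_eq_zero (fun x => q x • g x) (hqc.smul hg) hqgi hdiv
  set E := ∫ x, p x * f x with hE
  let D := fun x => gradient (fun y => Real.log (q y)) x - gradient (fun y => Real.log (p y)) x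
  have hpt : ∀ x, q x * ⟪D x, g x⟫ =
      vdiv (fun x => q x • g x) x - (q x * f x - q x * E) := by
    intro x
    have h1 := hst x
    rw [vdiv_smul q g hqc hqpos hg]
    unfold steinOp at h1 ⊢
    simp only [D, inner_sub_left]
    linear_combination -(q x) * h1
  have hfE : Integrable (fun x => q x * f x - q x * E) := hf.sub (hqi.mul_const E)
  have hint : (∫ x, q x * f x) - E = - ∫ x, q x * ⟪D x, g x⟫ := by
    simp_rw [hpt]
    rw [integral_sub hdiv hfE, integral_sub hf (hqi.mul_const E), hz,
      integral_mul_const, hqnorm]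
    ring
  rw [hint, enorm_neg]
  have hDc : Continuous D := hcq.sub hcp
  have hsc : Continuous (fun x => Real.sqrt (q x)) := hqc.continuous.sqrt
  have key := ENNReal.lintegral_mul_le_Lp_mul_Lq
    (volume : Measure (EuclideanSpace ℝ (Fin n))) Real.HolderConjugate.two_two
    (f := fun x => ENNReal.ofReal (Real.sqrt (q x) * ‖g x‖))
    (g := fun x => ENNReal.ofReal (Real.sqrt (q x) * ‖D x‖))
    (hsc.mul hg.continuous.norm).measurable.ennreal_ofReal.aemeasurable
    (hsc.mul hDc.norm).measurable.ennreal_ofReal.aemeasurable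
  have sq : ∀ (x : EuclideanSpace ℝ (Fin n)) (t : ℝ), 0 ≤ t →
      ENNReal.ofReal (Real.sqrt (q x) * t) ^ (2 : ℝ) = ENNReal.ofReal (q x * t ^ 2) := by
    intro x t ht
    rw [ENNReal.rpow_two, ← ENNReal.ofReal_pow (by positivity), mul_pow,
      Real.sq_sqrt (hqpos x).le]
  simp_rw [sq _ _ (norm_nonneg _)] at key
  refine (enorm_integral_le_lintegral_enorm _).trans (le_trans ?_ (key.trans_eq ?_))
  · refine lintegral_mono fun x => ?_
    simp only [Pi.mul_apply]
    rw [← ENNReal.ofReal_mul (by positivity), ← ofReal_norm]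
    refine ENNReal.ofReal_le_ofReal ?_
    rw [norm_mul, Real.norm_of_nonneg (hqpos x).le]
    have h1 := norm_inner_le_norm (𝕜 := ℝ) (D x) (g x)
    have h2 := Real.mul_self_sqrt (hqpos x).le
    calc q x * ‖⟪D x, g x⟫‖ ≤ q x * (‖D x‖ * ‖g x‖) := by
          gcongr
          exact (hqpos x).le
      _ = _ := by linear_combination -(‖D x‖ * ‖g x‖) * h2
  · rw [← ofReal_integral_eq_lintegral_ofReal hg2
      (.of_forall fun x => mul_nonneg (hqpos x).le (sq_nonneg _)), one_div,
      Real.sqrt_eq_rpow, one_div, ENNReal.ofReal_rpow_of_nonneg _ (by norm_num)]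
    · rfl
    · exact integral_nonneg fun x => mul_nonneg (hqpos x).le (sq_nonneg _)

lemma vec_bound {ι : Type*} [Fintype ι] (V : EuclideanSpace ℝ ι) (κ : ι → ℝ)
    (hκ : ∀ i, 0 ≤ κ i) (S : ℝ≥0∞)
    (h : ∀ i, ‖V i‖ₑ ≤ ENNReal.ofReal (Real.sqrt (κ i)) * S) :
    ‖V‖ₑ ≤ ENNReal.ofReal (Real.sqrt (∑ i, κ i)) * S := by
  rcases eq_or_ne S ⊤ with rfl | hS
  · by_cases h0 : ∑ i, κ i = 0
    · have h1 := (Finset.sum_eq_zero_iff_of_nonneg fun i _ => hκ i).1 h0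
      have : V = 0 := by
        ext i
        have := h i
        rw [h1 i (Finset.mem_univ i)] at this
        simpa using this
      simp [this]
    · have hpos : 0 < ∑ i, κ i := lt_of_le_of_ne (Finset.sum_nonneg fun i _ => hκ i) (Ne.symm h0)
      rw [ENNReal.mul_top]
      · exact le_top
      · simpa using hpos
  · lift S to NNReal using hS
    have e : ∀ t : ℝ, ENNReal.ofReal (Real.sqrt t) * (S : ℝ≥0∞)
        = ENNReal.ofReal (Real.sqrt t * S) := by
      intro t
      rw [ENNReal.ofReal_mul (Real.sqrt_nonneg _), ENNReal.ofReal_coe_nnreal]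
    simp_rw [e, ← ofReal_norm] at h ⊢
    refine ENNReal.ofReal_le_ofReal ?_
    have h' : ∀ i, ‖V i‖ ≤ Real.sqrt (κ i) * S := fun i =>
      (ENNReal.ofReal_le_ofReal_iff (by positivity)).1 (h i)
    rw [EuclideanSpace.norm_eq]
    refine Real.sqrt_le_iff.2 ⟨by positivity, ?_⟩
    rw [mul_pow, Real.sq_sqrt (Finset.sum_nonneg fun i _ => hκ i), Finset.sum_mul]
    refine Finset.sum_le_sum fun i _ => ?_
    calc ‖V i‖ ^ 2 ≤ (Real.sqrt (κ i) * S) ^ 2 := by gcongr; exact h' i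
      _ = _ := by rw [mul_pow, Real.sq_sqrt (hκ i)]

lemma vec_stein_bound {n : ℕ} {ι : Type*} [Fintype ι]
    (p q : EuclideanSpace ℝ (Fin n) → ℝ)
    (hp : ContDiff ℝ 1 p) (hppos : ∀ x, 0 < p x)
    (hqc : ContDiff ℝ 1 q) (hqpos : ∀ x, 0 < q x) (hqnorm : ∫ x, q x = 1)
    (f : EuclideanSpace ℝ (Fin n) → EuclideanSpace ℝ ι)
    (g : ι → EuclideanSpace ℝ (Fin n) → EuclideanSpace ℝ (Fin n))
    (h : ∀ i, SteinSolution p q (fun x => f x i) (g i))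
    (hqf : Integrable (fun x => q x • f x)) (hpf : Integrable (fun x => p x • f x)) :
    ‖(∫ x, q x • f x) - ∫ x, p x • f x‖ₑ ≤
      ENNReal.ofReal (Real.sqrt (∑ i, ∫ x, q x * ‖g i x‖ ^ 2))
        * (fisherDivL q p) ^ (2⁻¹ : ℝ) := by
  refine vec_bound _ _ (fun i => integral_nonneg fun x =>
    mul_nonneg (hqpos x).le (sq_nonneg _)) _ fun i => ?_
  have c : ∀ r : EuclideanSpace ℝ (Fin n) → ℝ, Integrable (fun x => r x • f x) →
      (∫ x, r x • f x) i = ∫ x, r x * f x i := fun r hr =>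
    ((EuclideanSpace.proj i : EuclideanSpace ℝ ι →L[ℝ] ℝ).integral_comp_comm hr).symm
  have hi : Integrable (fun x => q x * f x i) :=
    (EuclideanSpace.proj i : EuclideanSpace ℝ ι →L[ℝ] ℝ).integrable_comp hqf
  rw [PiLp.sub_apply, c q hqf, c p hpf]
  exact stein_bound p q hp hppos hqc hqpos hqnorm _ _ (h i) hi

lemma norm_outer {d m : ℕ} (a : EuclideanSpace ℝ (Fin d)) (b : EuclideanSpace ℝ (Fin m)) :
    ‖outer a b‖ = ‖a‖ * ‖b‖ := by
  rw [EuclideanSpace.norm_eq, EuclideanSpace.norm_eq, EuclideanSpace.norm_eq,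
    ← Real.sqrt_mul (by positivity), Fintype.sum_prod_type, Finset.sum_mul_sum]
  simp [outer, mul_pow]

lemma outer_sub_outer {d m : ℕ} (a a' : EuclideanSpace ℝ (Fin d))
    (b b' : EuclideanSpace ℝ (Fin m)) :
    outer a b - outer a' b' = outer a (b - b') + outer (a - a') b' := by
  ext ij
  simp [outer]
  ring

lemma norm_mean_le {n : ℕ} {F : Type*} [NormedAddCommGroup F] [NormedSpace ℝ F]
    (q : EuclideanSpace ℝ (Fin n) → ℝ) (hqpos : ∀ x, 0 < q x) (hqnorm : ∫ x, q x = 1)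
    (a : EuclideanSpace ℝ (Fin n) → F) (C : ℝ) (hC : ∀ x, ‖a x‖ ≤ C) :
    ‖∫ x, q x • a x‖ ≤ C := by
  have hqi : Integrable q := by
    by_contra hn
    rw [integral_undef hn] at hqnorm
    exact zero_ne_one hqnorm
  have := norm_integral_le_of_norm_le (f := fun x => q x • a x) (hqi.mul_const C)
    (.of_forall fun x => by
      rw [norm_smul, Real.norm_of_nonneg (hqpos x).le]
      exact mul_le_mul_of_nonneg_left (hC x) (hqpos x).le)
  rwa [integral_mul_const, hqnorm, one_mul] at this

/-- **Bias of VaGES, Fisher version.** Let `p, q` be `C¹` strictly positive probability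
densities on `ℝⁿ`, and let `a, b` be bounded by `C` with every component of `a`, `b`, `M`
and `a bᵀ` admitting a Stein solution w.r.t. `p` (regular w.r.t. `q`). Then
`‖(E_q[M] + Cov_q(a,b)) − (E_p[M] + Cov_p(a,b))‖_F
  ≤ (κ_{ab} + C·κ_b + C·κ_a + κ_M) · √(F(q‖p))`. -/
theorem vages_bias_le_sqrt_fisher {n d m : ℕ}
    (p q : EuclideanSpace ℝ (Fin n) → ℝ)
    (hp : ContDiff ℝ 1 p) (hppos : ∀ x, 0 < p x) (hpnorm : ∫ x, p x = 1)
    (hqc : ContDiff ℝ 1 q) (hqpos : ∀ x, 0 < q x) (hqnorm : ∫ x, q x = 1)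
    (a : EuclideanSpace ℝ (Fin n) → EuclideanSpace ℝ (Fin d))
    (b : EuclideanSpace ℝ (Fin n) → EuclideanSpace ℝ (Fin m))
    (M : EuclideanSpace ℝ (Fin n) → EuclideanSpace ℝ (Fin d × Fin m))
    (C : ℝ) (hCa : ∀ h, ‖a h‖ ≤ C) (hCb : ∀ h, ‖b h‖ ≤ C)
    (ga : Fin d → EuclideanSpace ℝ (Fin n) → EuclideanSpace ℝ (Fin n))
    (gb : Fin m → EuclideanSpace ℝ (Fin n) → EuclideanSpace ℝ (Fin n))
    (gM gab : Fin d × Fin m → EuclideanSpace ℝ (Fin n) → EuclideanSpace ℝ (Fin n))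
    (hga : ∀ i, SteinSolution p q (fun x => a x i) (ga i))
    (hgb : ∀ j, SteinSolution p q (fun x => b x j) (gb j))
    (hgM : ∀ ij, SteinSolution p q (fun x => M x ij) (gM ij))
    (hgab : ∀ ij : Fin d × Fin m, SteinSolution p q (fun x => a x ij.1 * b x ij.2) (gab ij))
    (hqa : Integrable (fun x => q x • a x)) (hpa : Integrable (fun x => p x • a x))
    (hqb : Integrable (fun x => q x • b x)) (hpb : Integrable (fun x => p x • b x))
    (hqM : Integrable (fun x => q x • M x)) (hpM : Integrable (fun x => p x • M x))
    (hqab : Integrable (fun x => q x • outer (a x) (b x)))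
    (hpab : Integrable (fun x => p x • outer (a x) (b x))) :
    (‖((∫ x, q x • M x) +
          ((∫ x, q x • outer (a x) (b x)) - outer (∫ x, q x • a x) (∫ x, q x • b x)))
        - ((∫ x, p x • M x) +
          ((∫ x, p x • outer (a x) (b x)) - outer (∫ x, p x • a x) (∫ x, p x • b x)))‖₊ : ℝ≥0∞)
      ≤ ENNReal.ofReal
          (Real.sqrt (∑ ij : Fin d × Fin m, ∫ x, q x * ‖gab ij x‖ ^ 2)
            + C * Real.sqrt (∑ j, ∫ x, q x * ‖gb j x‖ ^ 2)
            + C * Real.sqrt (∑ i, ∫ x, q x * ‖ga i x‖ ^ 2)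
            + Real.sqrt (∑ ij : Fin d × Fin m, ∫ x, q x * ‖gM ij x‖ ^ 2))
        * (fisherDivL q p) ^ (2⁻¹ : ℝ) := by
  have hC : 0 ≤ C := (norm_nonneg _).trans (hCa 0)
  have Ba := vec_stein_bound p q hp hppos hqc hqpos hqnorm a ga hga hqa hpa
  have Bb := vec_stein_bound p q hp hppos hqc hqpos hqnorm b gb hgb hqb hpb
  have BM := vec_stein_bound p q hp hppos hqc hqpos hqnorm M gM hgM hqM hpM
  have Bab := vec_stein_bound p q hp hppos hqc hqpos hqnorm (fun x => outer (a x) (b x)) gab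
    hgab hqab hpab
  have nqa := norm_mean_le q hqpos hqnorm a C hCa
  have npb := norm_mean_le p hppos hpnorm b C hCb
  have hout : ∀ (u : EuclideanSpace ℝ (Fin d)) (v : EuclideanSpace ℝ (Fin m)),
      ‖outer u v‖ₑ = ‖u‖ₑ * ‖v‖ₑ := by
    intro u v
    simp_rw [← ofReal_norm]
    rw [norm_outer, ENNReal.ofReal_mul (norm_nonneg _)]
  rw [← enorm_eq_nnnorm]
  set S := (fisherDivL q p) ^ (2⁻¹ : ℝ)
  have O1 : ‖outer (∫ x, q x • a x) ((∫ x, q x • b x) - ∫ x, p x • b x)‖ₑ ≤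
      ENNReal.ofReal (C * Real.sqrt (∑ j, ∫ x, q x * ‖gb j x‖ ^ 2)) * S := by
    rw [hout, ENNReal.ofReal_mul hC, mul_assoc]
    refine mul_le_mul' ?_ Bb
    rw [← ofReal_norm]
    exact ENNReal.ofReal_le_ofReal nqa
  have O2 : ‖outer ((∫ x, q x • a x) - ∫ x, p x • a x) (∫ x, p x • b x)‖ₑ ≤
      ENNReal.ofReal (C * Real.sqrt (∑ i, ∫ x, q x * ‖ga i x‖ ^ 2)) * S := by
    rw [hout, ENNReal.ofReal_mul hC, mul_assoc, mul_comm]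
    refine mul_le_mul' ?_ Ba
    rw [← ofReal_norm]
    exact ENNReal.ofReal_le_ofReal npb
  have hO := outer_sub_outer (∫ x, q x • a x) (∫ x, p x • a x) (∫ x, q x • b x)
    (∫ x, p x • b x)
  have split : ∀ m1 m2 o1 o2 r1 r2 : EuclideanSpace ℝ (Fin d × Fin m),
      (m1 + (o1 - r1)) - (m2 + (o2 - r2)) = ((o1 - o2) - (r1 - r2)) + (m1 - m2) := by
    intros
    abel
  rw [split, hO, ENNReal.ofReal_add (by positivity) (by positivity),
    ENNReal.ofReal_add (by positivity) (by positivity),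
    ENNReal.ofReal_add (by positivity) (by positivity), add_mul, add_mul, add_mul]
  refine (enorm_add_le _ _).trans (add_le_add ?_ BM)
  refine enorm_sub_le.trans ?_
  rw [add_assoc]
  exact add_le_add Bab ((enorm_add_le _ _).trans (add_le_add O1 O2))
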